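/- Let D be a cone metric on X, d the induced real-valued function, T : X → X a map, λ ∈ [0,1/2), and x,y ∈ X. If D(Tx,Ty) ≤ λ·(D(Tx,x) + D(Ty,y)), then d(Tx,Ty) ≤ λ·(d(Tx,x) + d(Ty,y)). -/

import Mathlib

/-!
If `u` dominates `D (T x) x` and `v` dominates `D (T y) y`, then `lam • (u + v)` dominates
`D (T x) (T y)`, so `d (T x) (T y) ≤ lam * (‖u‖ + ‖v‖)`. Taking `‖u‖` and `‖v‖` arbitrarily close to
the two infima gives the claim.
-/

open Filter Topology

/-- A cone in a real Banach space `E`. -/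
structure IsCone (E : Type*) [NormedAddCommGroup E] [NormedSpace ℝ E] (P : Set E) : Prop where
  closed : IsClosed P
  nonempty : P.Nonempty
  ne_singleton_zero : P ≠ {0}
  combo_mem : ∀ a b : ℝ, 0 ≤ a → 0 ≤ b → ∀ x y : E, x ∈ P → y ∈ P → a • x + b • y ∈ P
  eq_zero_of_mem_of_neg_mem : ∀ x : E, x ∈ P → -x ∈ P → x = 0

/-- `x ≤ y` with respect to the cone `P`, i.e. `y - x ∈ P`. -/
def coneLe {E : Type*} [NormedAddCommGroup E] (P : Set E) (x y : E) : Prop :=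
  y - x ∈ P

/-- `x ≪ y` with respect to the cone `P`, i.e. `y - x ∈ interior P`. -/
def coneLt {E : Type*} [NormedAddCommGroup E] (P : Set E) (x y : E) : Prop :=
  y - x ∈ interior P

/-- `D : X × X → E` is a cone metric with respect to the cone `P`. -/
structure IsConeMetric {E : Type*} [NormedAddCommGroup E] (P : Set E)
    {X : Type*} (D : X → X → E) : Prop where
  nonneg : ∀ x y : X, coneLe P 0 (D x y)
  eq_zero_iff : ∀ x y : X, (D x y = 0 ↔ x = y)
  symm : ∀ x y : X, D x y = D y x
  triangle : ∀ x y z : X, coneLe P (D x y) (D x z + D z y)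

/-- The induced real-valued function `d(x,y) = inf {‖u‖ : D x y ≤ u}`. -/
noncomputable def inducedDist {E : Type*} [NormedAddCommGroup E] (P : Set E)
    {X : Type*} (D : X → X → E) (x y : X) : ℝ :=
  sInf {r : ℝ | ∃ u : E, r = ‖u‖ ∧ coneLe P (D x y) u}

/-- Points of the set defining `inducedDist` come arbitrarily close to the infimum; the set is
nonempty because it contains `‖D x y‖`. -/
lemma exists_norm_lt_inducedDist_add {E X : Type*} [NormedAddCommGroup E] (P : Set E)
    (h0 : (0 : E) ∈ P) (D : X → X → E) (x y : X) {ε : ℝ} (hε : 0 < ε) :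
    ∃ u : E, coneLe P (D x y) u ∧ ‖u‖ < inducedDist P D x y + ε := by
  have hne : {r : ℝ | ∃ u : E, r = ‖u‖ ∧ coneLe P (D x y) u}.Nonempty :=
    ⟨_, D x y, rfl, by simpa [coneLe] using h0⟩
  obtain ⟨_, ⟨u, rfl, hu⟩, hlt⟩ := Real.lt_sInf_add_pos hne hε
  exact ⟨u, hu, hlt⟩

lemma inducedDist_le_norm {E X : Type*} [NormedAddCommGroup E] (P : Set E)
    (D : X → X → E) (x y : X) {u : E} (hu : coneLe P (D x y) u) :
    inducedDist P D x y ≤ ‖u‖ :=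
  csInf_le ⟨0, by rintro _ ⟨v, rfl, -⟩; exact norm_nonneg v⟩ ⟨u, rfl, hu⟩

theorem stmt11 {E X : Type*} [NormedAddCommGroup E] [NormedSpace ℝ E] [CompleteSpace E]
    [Nonempty X] (P : Set E) (hP : IsCone E P) (hPint : (interior P).Nonempty)
    (D : X → X → E) (hD : IsConeMetric P D) (T : X → X) (lam : ℝ) (hl0 : 0 ≤ lam) (hl1 : lam < 1 / 2)
    (x y : X) (h : coneLe P (D (T x) (T y)) (lam • (D (T x) x + D (T y) y))) :
    inducedDist P D (T x) (T y) ≤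
      lam * (inducedDist P D (T x) x + inducedDist P D (T y) y) := by
  have h0 : (0 : E) ∈ P := by
    obtain ⟨p, hp⟩ := hP.nonempty
    simpa using hP.combo_mem 0 0 le_rfl le_rfl p p hp hp
  refine le_of_forall_pos_le_add fun ε hε => ?_
  obtain ⟨u, hu, hu'⟩ := exists_norm_lt_inducedDist_add P h0 D (T x) x hε
  obtain ⟨v, hv, hv'⟩ := exists_norm_lt_inducedDist_add P h0 D (T y) y hε
  -- `lam • (u + v)` dominates `lam • (D (T x) x + D (T y) y)`, hence `D (T x) (T y)`.
  have huv : coneLe P (D (T x) (T y)) (lam • (u + v)) := by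
    have h1 := hP.combo_mem lam lam hl0 hl0 _ _ hu hv
    have h2 := hP.combo_mem 1 1 zero_le_one zero_le_one _ _ h1 h
    unfold coneLe
    convert h2 using 1
    module
  have hnorm : ‖lam • (u + v)‖ ≤ lam * (‖u‖ + ‖v‖) := by
    rw [norm_smul, Real.norm_of_nonneg hl0]
    exact mul_le_mul_of_nonneg_left (norm_add_le u v) hl0
  have hle := inducedDist_le_norm P D (T x) (T y) huv
  -- The total error is `2 * lam * ε ≤ ε`.
  nlinarith [mul_le_mul_of_nonneg_left (add_le_add hu'.le hv'.le) hl0]
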